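/- arXiv:2101.10259 — 3 statements merged into one kernel-verified Lean document; each statement's English description precedes it below -/
import Mathlib

section
/- Let Ω = (a₁,b₁)×(a₂,b₂) be an open rectangle in ℝ² (with a₁<b₁, a₂<b₂) and let φ = (φ₁,φ₂) : ℝ² → ℝ² be continuously differentiable on a neighborhood of the closure of Ω and satisfy the boundary condition φ·n = 0 on ∂Ω. If the Jacobian determinant g_Φ(x) = det ∇Φ(x) of the map Φ = id + φ is strictly positive for every x in the closure of Ω, then Φ maps the closure of Ω bijectively onto the closure of Ω (in particular Φ is a bijection from Ω onto Ω). -/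
namespace RectReg

abbrev E := EuclideanSpace ℝ (Fin 2)

def K (a b : Fin 2 → ℝ) : Set E := {x | ∀ i, x i ∈ Set.Icc (a i) (b i)}
def O (a b : Fin 2 → ℝ) : Set E := {x | ∀ i, x i ∈ Set.Ioo (a i) (b i)}

lemma isClosed_K (a b : Fin 2 → ℝ) : IsClosed (K a b) := by
  have : K a b = ⋂ i, {x : E | x i ∈ Set.Icc (a i) (b i)} := by ext x; simp [K]
  rw [this]
  exact isClosed_iInter fun i => isClosed_Icc.preimage (by fun_prop)

lemma isOpen_O (a b : Fin 2 → ℝ) : IsOpen (O a b) := by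
  have : O a b = ⋂ i, {x : E | x i ∈ Set.Ioo (a i) (b i)} := by ext x; simp [O]
  rw [this]
  exact isOpen_iInter_of_finite fun i => isOpen_Ioo.preimage (by fun_prop)

lemma convex_O (a b : Fin 2 → ℝ) : Convex ℝ (O a b) := by
  intro x hx y hy s t hs ht hst i
  have := convex_Ioo (a i) (b i) (hx i) (hy i) hs ht hst
  simpa using this

lemma O_sub_K (a b : Fin 2 → ℝ) : O a b ⊆ K a b :=
  fun _ hx i => Set.Ioo_subset_Icc_self (hx i)

lemma isCompact_K (a b : Fin 2 → ℝ) : IsCompact (K a b) := by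
  have h : IsCompact (Set.Icc a b) := isCompact_Icc
  have h2 := h.image (PiLp.continuous_toLp 2 (fun _ : Fin 2 => ℝ))
  convert h2 using 1
  ext x
  constructor
  · intro hx
    exact ⟨x.ofLp, ⟨fun i => (hx i).1, fun i => (hx i).2⟩, rfl⟩
  · rintro ⟨y, hy, rfl⟩ i
    exact ⟨hy.1 i, hy.2 i⟩

lemma closure_O (a b : Fin 2 → ℝ) (hab : ∀ i, a i < b i) : closure (O a b) = K a b := by
  apply Set.Subset.antisymm
  · exact closure_minimal (O_sub_K a b) (isClosed_K a b)
  · intro x hx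
    let m : E := WithLp.toLp 2 (fun i => (a i + b i) / 2)
    let g : ℝ → E := fun t => x + t • (m - x)
    have hg : Continuous g := by fun_prop
    have h0 : g 0 = x := by simp [g]
    have : Filter.Tendsto g (nhdsWithin 0 (Set.Ioi 0)) (nhds x) := by
      rw [← h0]; exact hg.continuousAt.tendsto.mono_left nhdsWithin_le_nhds
    apply mem_closure_of_tendsto this
    filter_upwards [Ioo_mem_nhdsGT (zero_lt_one (α := ℝ))] with t ht i
    have h1 := hx i
    have h2 := hab i
    simp only [g, m, PiLp.add_apply, PiLp.smul_apply, PiLp.sub_apply, smul_eq_mul]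
    constructor <;> nlinarith [h1.1, h1.2, ht.1, ht.2, mul_pos ht.1 (sub_pos.2 h2),
      mul_nonneg (sub_nonneg.2 ht.2.le) (sub_nonneg.2 h1.1),
      mul_nonneg (sub_nonneg.2 ht.2.le) (sub_nonneg.2 h1.2)]

structure Hyp (a b : Fin 2 → ℝ) (Φ : E → E) : Prop where
  hab : ∀ i, a i < b i
  d : ∀ x ∈ K a b, ∃ D : E ≃L[ℝ] E, HasStrictFDerivAt Φ (D : E →L[ℝ] E) x
  bc : ∀ x ∈ K a b, ∀ i, (x i = a i ∨ x i = b i) → Φ x i = x i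

variable {a b : Fin 2 → ℝ} {Φ : E → E}

lemma Hyp.cont (h : Hyp a b Φ) : ContinuousOn Φ (K a b) := fun x hx => by
  obtain ⟨D, hD⟩ := h.d x hx
  exact hD.continuousAt.continuousWithinAt

lemma fin_cases_ij {i j : Fin 2} (hij : i ≠ j) (k : Fin 2) : k = i ∨ k = j := by
  omega

/-- point with i-coordinate c and j-coordinate t -/
noncomputable def P (i j : Fin 2) (c t : ℝ) : E :=
  EuclideanSpace.single i c + t • EuclideanSpace.single j (1:ℝ)

lemma P_i {i j : Fin 2} (hij : i ≠ j) (c t : ℝ) : P i j c t i = c := by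
  simp [P, hij]
lemma P_j {i j : Fin 2} (hij : i ≠ j) (c t : ℝ) : P i j c t j = t := by
  simp [P, hij.symm]
lemma P_eq {i j : Fin 2} (hij : i ≠ j) (x : E) : P i j (x i) (x j) = x := by
  ext k
  rcases fin_cases_ij hij k with rfl | rfl
  · exact P_i hij _ _
  · exact P_j hij _ _

lemma P_mem (h : Hyp a b Φ) {i j : Fin 2} (hij : i ≠ j) {c t : ℝ} (hc : c = a i ∨ c = b i)
    (ht : t ∈ Set.Icc (a j) (b j)) : P i j c t ∈ K a b := by
  intro k
  have := h.hab i
  rcases fin_cases_ij hij k with rfl | rfl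
  · rw [P_i hij]; rcases hc with rfl | rfl <;> constructor <;> linarith
  · rwa [P_j hij]

lemma Hyp.edge (h : Hyp a b Φ) {i j : Fin 2} (hij : i ≠ j) {c : ℝ} (hc : c = a i ∨ c = b i) :
    StrictMonoOn (fun t => Φ (P i j c t) j) (Set.Icc (a j) (b j)) := by
  have hP : Continuous (P i j c) := by unfold P; fun_prop
  have hcont : ContinuousOn (fun t => Φ (P i j c t) j) (Set.Icc (a j) (b j)) := by
    have h1 : ContinuousOn (fun t => Φ (P i j c t)) (Set.Icc (a j) (b j)) :=
      h.cont.comp hP.continuousOn (fun t ht => P_mem h hij hc ht)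
    have h2 : Continuous (fun x : E => x j) := by fun_prop
    exact h2.comp_continuousOn h1
  have key : ∀ x ∈ Set.Icc (a j) (b j), ∀ y ∈ Set.Icc (a j) (b j), x < y →
      Φ (P i j c x) j ≠ Φ (P i j c y) j := by
    intro x hx y hy hxy heq
    have hder : ∀ t ∈ Set.Icc (a j) (b j), ∀ D : E →L[ℝ] E, HasFDerivAt Φ D (P i j c t) →
        ∀ k, HasDerivAt (fun t => Φ (P i j c t) k) (D (EuclideanSpace.single j 1) k) t := by
      intro t ht D hD k
      have hp : HasDerivAt (P i j c) (EuclideanSpace.single j (1:ℝ)) t := by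
        unfold P
        simpa using ((hasDerivAt_id t).smul_const (EuclideanSpace.single j (1:ℝ))).const_add
          (EuclideanSpace.single i c)
      have h1 := hD.comp_hasDerivAt t hp
      have h2 := (EuclideanSpace.proj k : E →L[ℝ] ℝ).hasFDerivAt.comp_hasDerivAt t h1
      exact h2
    have hsub : Set.Ioo x y ⊆ Set.Icc (a j) (b j) := fun t ht =>
      ⟨hx.1.trans ht.1.le, ht.2.le.trans hy.2⟩
    obtain ⟨t, ht, hz⟩ := exists_deriv_eq_zero hxy
      (hcont.mono (Set.Icc_subset_Icc hx.1 hy.2)) heq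
    have htK := P_mem h hij hc (hsub ht)
    obtain ⟨D, hD⟩ := h.d _ htK
    have hj := hder t (hsub ht) D hD.hasFDerivAt j
    rw [hj.deriv] at hz
    have hi := hder t (hsub ht) D hD.hasFDerivAt i
    have hi0 : HasDerivAt (fun t => Φ (P i j c t) i) 0 t := by
      apply (hasDerivAt_const t c).congr_of_eventuallyEq
      filter_upwards [isOpen_Ioo.mem_nhds ht] with s hs
      have := h.bc _ (P_mem h hij hc (hsub hs)) i (by rwa [P_i hij])
      rw [this, P_i hij]
    have hi' := hi.unique hi0
    have : D (EuclideanSpace.single j 1) = 0 := by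
      ext k
      rcases fin_cases_ij hij k with rfl | rfl
      · exact hi'
      · exact hz
    have h3 : (EuclideanSpace.single j (1:ℝ) : E) = 0 := by simp at this
    have h4 := congrArg (fun v : E => v j) h3
    simp at h4
  have hinj : Set.InjOn (fun t => Φ (P i j c t) j) (Set.Icc (a j) (b j)) := by
    intro x hx y hy hxy
    rcases lt_trichotomy x y with hlt | heq | hlt
    · exact absurd hxy (key x hx y hy hlt)
    · exact heq
    · exact absurd hxy.symm (key y hy x hx hlt)
  have hle := (h.hab j).le
  refine hcont.strictMonoOn_of_injOn_Icc hle ?_ hinj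
  have e1 := h.bc _ (P_mem h hij hc (Set.left_mem_Icc.2 hle)) j (by rw [P_j hij]; simp)
  have e2 := h.bc _ (P_mem h hij hc (Set.right_mem_Icc.2 hle)) j (by rw [P_j hij]; simp)
  simp only [e1, e2, P_j hij]
  exact hle

lemma exists_ne_fin (i : Fin 2) : ∃ j : Fin 2, j ≠ i := exists_ne i

lemma O_of {i j : Fin 2} (hij : i ≠ j) {x : E} (hi : x i ∈ Set.Ioo (a i) (b i))
    (hj : x j ∈ Set.Ioo (a j) (b j)) : x ∈ O a b := by
  intro k
  rcases fin_cases_ij hij k with rfl | rfl <;> assumption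

/-- no local extremum of a component at interior points -/
lemma Hyp.noext (h : Hyp a b Φ) {x : E} (hx : x ∈ O a b) (i : Fin 2)
    (he : IsLocalExtr (fun y => Φ y i) x) : False := by
  obtain ⟨D, hD⟩ := h.d x (O_sub_K a b hx)
  have h2 := (EuclideanSpace.proj i : E →L[ℝ] ℝ).hasFDerivAt.comp x hD.hasFDerivAt
  have h3 := he.hasFDerivAt_eq_zero h2
  have h4 := congrArg (fun L : E →L[ℝ] ℝ => L (D.symm (EuclideanSpace.single i 1))) h3
  simp at h4

lemma Hyp.max (h : Hyp a b Φ) (i : Fin 2) {z : E} (hz : z ∈ K a b)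
    (hm : IsMaxOn (fun y => Φ y i) (K a b) z) : z i = b i := by
  obtain ⟨j, hji⟩ := exists_ne_fin i
  have hi := hz i
  have hj := hz j
  have hab := h.hab i
  by_contra hne
  have hlt : z i < b i := lt_of_le_of_ne hi.2 hne
  have hedge : ∀ c, (c = a j ∨ c = b j) → z j = c → False := by
    intro c hc hzc
    have h1 := h.edge hji hc hi (Set.right_mem_Icc.2 hab.le) hlt
    have h2 := hm (P_mem h hji hc (Set.right_mem_Icc.2 hab.le))
    simp only [Set.mem_ofPred_eq, ← hzc, P_eq hji] at h1 h2
    linarith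
  have hj1 : a j < z j := lt_of_le_of_ne hj.1 fun e => hedge _ (Or.inl rfl) e.symm
  have hj2 : z j < b j := lt_of_le_of_ne hj.2 fun e => hedge _ (Or.inr rfl) e
  rcases hi.1.eq_or_lt with he | hi1
  · have e1 := h.bc z hz i (Or.inl he.symm)
    have hm1 := P_mem h hji.symm (Or.inr rfl) hj
    have e2 := h.bc _ hm1 i (by rw [P_i hji.symm]; simp)
    have h2 := hm hm1
    simp only [Set.mem_ofPred_eq, e1, e2, P_i hji.symm] at h2
    linarith
  · have hO := O_of hji ⟨hj1, hj2⟩ ⟨hi1, hlt⟩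
    exact h.noext hO i (Or.inr (hm.isLocalMax
      (Filter.mem_of_superset ((isOpen_O a b).mem_nhds hO) (O_sub_K a b))))

lemma Hyp.min (h : Hyp a b Φ) (i : Fin 2) {z : E} (hz : z ∈ K a b)
    (hm : IsMinOn (fun y => Φ y i) (K a b) z) : z i = a i := by
  obtain ⟨j, hji⟩ := exists_ne_fin i
  have hi := hz i
  have hj := hz j
  have hab := h.hab i
  by_contra hne
  have hlt : a i < z i := lt_of_le_of_ne hi.1 (Ne.symm hne)
  have hedge : ∀ c, (c = a j ∨ c = b j) → z j = c → False := by
    intro c hc hzc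
    have h1 := h.edge hji hc (Set.left_mem_Icc.2 hab.le) hi hlt
    have h2 := hm (P_mem h hji hc (Set.left_mem_Icc.2 hab.le))
    simp only [Set.mem_ofPred_eq, ← hzc, P_eq hji] at h1 h2
    linarith
  have hj1 : a j < z j := lt_of_le_of_ne hj.1 fun e => hedge _ (Or.inl rfl) e.symm
  have hj2 : z j < b j := lt_of_le_of_ne hj.2 fun e => hedge _ (Or.inr rfl) e
  rcases hi.2.eq_or_lt with he | hi1
  · have e1 := h.bc z hz i (Or.inr he)
    have hm1 := P_mem h hji.symm (Or.inl rfl) hj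
    have e2 := h.bc _ hm1 i (by rw [P_i hji.symm]; simp)
    have h2 := hm hm1
    simp only [Set.mem_ofPred_eq, e1, e2, P_i hji.symm] at h2
    linarith
  · have hO := O_of hji ⟨hj1, hj2⟩ ⟨hlt, hi1⟩
    exact h.noext hO i (Or.inl (hm.isLocalMin
      (Filter.mem_of_superset ((isOpen_O a b).mem_nhds hO) (O_sub_K a b))))

lemma Hyp.comp_cont (h : Hyp a b Φ) (i : Fin 2) : ContinuousOn (fun y => Φ y i) (K a b) := by
  have h2 : Continuous (fun x : E => x i) := by fun_prop
  exact h2.comp_continuousOn h.cont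

lemma Hyp.upper (h : Hyp a b Φ) (i : Fin 2) {x : E} (hx : x ∈ K a b) :
    Φ x i ≤ b i ∧ (Φ x i = b i → x i = b i) := by
  obtain ⟨z, hz, hm⟩ := (isCompact_K a b).exists_isMaxOn ⟨x, hx⟩ (h.comp_cont i)
  have e := h.max i hz hm
  have e2 := h.bc z hz i (Or.inr e)
  have h1 : Φ x i ≤ Φ z i := hm hx
  refine ⟨by linarith, fun e3 => h.max i hx fun y hy => ?_⟩
  have h2 : Φ y i ≤ Φ z i := hm hy
  simp only [Set.mem_ofPred_eq]
  linarith

lemma Hyp.lower (h : Hyp a b Φ) (i : Fin 2) {x : E} (hx : x ∈ K a b) :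
    a i ≤ Φ x i ∧ (Φ x i = a i → x i = a i) := by
  obtain ⟨z, hz, hm⟩ := (isCompact_K a b).exists_isMinOn ⟨x, hx⟩ (h.comp_cont i)
  have e := h.min i hz hm
  have e2 := h.bc z hz i (Or.inl e)
  have h1 : Φ z i ≤ Φ x i := hm hx
  refine ⟨by linarith, fun e3 => h.min i hx fun y hy => ?_⟩
  have h2 : Φ z i ≤ Φ y i := hm hy
  simp only [Set.mem_ofPred_eq]
  linarith

lemma Hyp.mapsK (h : Hyp a b Φ) : Set.MapsTo Φ (K a b) (K a b) := fun _ hx i =>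
  ⟨(h.lower i hx).1, (h.upper i hx).1⟩

lemma Hyp.mapsO (h : Hyp a b Φ) : Set.MapsTo Φ (O a b) (O a b) := fun x hx i => by
  have hK := O_sub_K a b hx
  refine ⟨lt_of_le_of_ne (h.lower i hK).1 fun e => ?_,
    lt_of_le_of_ne (h.upper i hK).1 fun e => ?_⟩
  · exact (hx i).1.ne' ((h.lower i hK).2 e.symm)
  · exact (hx i).2.ne ((h.upper i hK).2 e)

/-- points of K mapping into O are in O -/
lemma Hyp.backO (h : Hyp a b Φ) {x : E} (hx : x ∈ K a b) (hy : Φ x ∈ O a b) : x ∈ O a b := by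
  intro i
  have := hy i
  refine ⟨lt_of_le_of_ne (hx i).1 fun e => ?_, lt_of_le_of_ne (hx i).2 fun e => ?_⟩
  · have e2 := h.bc x hx i (Or.inl e.symm)
    linarith [this.1]
  · have e2 := h.bc x hx i (Or.inr e)
    linarith [this.2]

lemma Hyp.edge_inj (h : Hyp a b Φ) {i : Fin 2} {c : ℝ} (hc : c = a i ∨ c = b i) {x y : E}
    (hx : x ∈ K a b) (hy : y ∈ K a b) (hxi : x i = c) (hyi : y i = c) (e : Φ x = Φ y) :
    x = y := by
  obtain ⟨j, hji⟩ := exists_ne_fin i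
  have e1 := P_eq hji.symm x
  have e2 := P_eq hji.symm y
  have := (h.edge hji.symm hc).injOn (hx j) (hy j)
  rw [hxi] at e1
  rw [hyi] at e2
  simp only [e1, e2] at this
  rw [← e1, ← e2, this (by rw [e])]

lemma Hyp.pair_O (h : Hyp a b Φ) {x y : E}
    (hx : x ∈ K a b) (hy : y ∈ K a b) (e : Φ x = Φ y) (hne : x ≠ y) : Φ x ∈ O a b := by
  intro i
  refine ⟨lt_of_le_of_ne (h.lower i hx).1 fun e1 => ?_,
    lt_of_le_of_ne (h.upper i hx).1 fun e1 => ?_⟩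
  · exact hne (h.edge_inj (Or.inl rfl) hx hy ((h.lower i hx).2 e1.symm)
      ((h.lower i hy).2 (by rw [← e, e1])) e)
  · exact hne (h.edge_inj (Or.inr rfl) hx hy ((h.upper i hx).2 e1)
      ((h.upper i hy).2 (by rw [← e, e1])) e)

lemma Hyp.map_nhds (h : Hyp a b Φ) {x : E} (hx : x ∈ K a b) :
    Filter.map Φ (nhds x) = nhds (Φ x) := by
  obtain ⟨D, hD⟩ := h.d x hx
  exact hD.map_nhds_eq_of_equiv

lemma Hyp.loc_inj (h : Hyp a b Φ) {x : E} (hx : x ∈ K a b) :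
    ∃ V ∈ nhds x, Set.InjOn Φ V := by
  obtain ⟨D, hD⟩ := h.d x hx
  exact ⟨(hD.toOpenPartialHomeomorph Φ).source,
    (hD.toOpenPartialHomeomorph Φ).open_source.mem_nhds hD.mem_toOpenPartialHomeomorph_source,
    (hD.toOpenPartialHomeomorph Φ).injOn⟩

lemma Hyp.surj (h : Hyp a b Φ) : Φ '' O a b = O a b := by
  have hK : IsClosed (Φ '' K a b) := ((isCompact_K a b).image_of_continuousOn h.cont).isClosed
  have hopen : IsOpen (Φ '' O a b) := by
    rw [isOpen_iff_mem_nhds]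
    rintro _ ⟨x, hx, rfl⟩
    rw [← h.map_nhds (O_sub_K a b hx)]
    exact Filter.image_mem_map ((isOpen_O a b).mem_nhds hx)
  apply Set.Subset.antisymm (Set.image_subset_iff.2 h.mapsO)
  have hne : (O a b).Nonempty := by
    refine ⟨WithLp.toLp 2 (fun i => (a i + b i) / 2), fun i => ?_⟩
    have := h.hab i
    constructor <;> simp <;> linarith
  obtain ⟨x0, hx0⟩ := hne
  apply (convex_O a b).isPreconnected.subset_of_closure_inter_subset hopen
  · exact ⟨Φ x0, h.mapsO hx0, x0, hx0, rfl⟩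
  · rintro y ⟨hy, hyO⟩
    have : y ∈ Φ '' K a b :=
      closure_minimal (Set.image_mono (O_sub_K a b)) hK hy
    obtain ⟨x, hx, rfl⟩ := this
    exact ⟨x, h.backO hx hyO, rfl⟩

lemma Hyp.inj (h : Hyp a b Φ) : Set.InjOn Φ (K a b) := by
  let T : Set (E × E) := {p | p ∈ K a b ×ˢ K a b ∧ Φ p.1 = Φ p.2 ∧ p.1 ≠ p.2}
  have hT : IsClosed T := by
    rw [← closure_subset_iff_isClosed]
    intro p hp
    have hpK : p ∈ K a b ×ˢ K a b :=
      closure_minimal (fun q hq => hq.1) ((isClosed_K a b).prod (isClosed_K a b)) hp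
    rw [mem_closure_iff_clusterPt, clusterPt_iff_frequently'] at hp
    replace hp := hp T (Filter.mem_principal_self T)
    have c1 : ContinuousAt Φ p.1 := by
      obtain ⟨D, hD⟩ := h.d _ hpK.1
      exact hD.continuousAt
    have c2 : ContinuousAt Φ p.2 := by
      obtain ⟨D, hD⟩ := h.d _ hpK.2
      exact hD.continuousAt
    have c : ContinuousAt (fun q : E × E => (Φ q.1, Φ q.2)) p :=
      (c1.comp continuousAt_fst).prodMk (c2.comp continuousAt_snd)
    refine ⟨hpK, ?_, ?_⟩
    · by_contra hne
      have hev : ∀ᶠ q in nhds p, Φ q.1 ≠ Φ q.2 :=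
        c.eventually ((isOpen_ne_fun continuous_fst continuous_snd).mem_nhds hne)
      obtain ⟨q, hq, hq2⟩ := (hp.and_eventually hev).exists
      exact hq2 hq.2.1
    · intro heq
      obtain ⟨V, hV, hinj⟩ := h.loc_inj hpK.1
      have hV2 : V ∈ nhds p.2 := heq ▸ hV
      have hev : ∀ᶠ q in nhds p, q ∈ V ×ˢ V := by
        have := prod_mem_nhds hV hV2
        exact this
      obtain ⟨q, hq, hq2⟩ := (hp.and_eventually hev).exists
      exact hq.2.2 (hinj hq2.1 hq2.2 hq.2.1)
  have hTc : IsCompact T :=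
    ((isCompact_K a b).prod (isCompact_K a b)).of_isClosed_subset hT fun q hq => hq.1
  let S : Set E := (fun p : E × E => Φ p.1) '' T
  have hSc : IsCompact S :=
    hTc.image_of_continuousOn (h.cont.comp continuous_fst.continuousOn fun q hq => hq.1.1)
  have hSo : IsOpen S := by
    rw [isOpen_iff_mem_nhds]
    rintro _ ⟨⟨x, y⟩, ⟨⟨hx, hy⟩, he, hne⟩, rfl⟩
    simp only at he hne hx hy ⊢
    have hO := h.pair_O hx hy he hne
    have hxO := h.backO hx hO
    have hyO := h.backO hy (he ▸ hO)
    obtain ⟨V, W, hV, hW, hxV, hyW, hd⟩ := t2_separation hne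
    have m1 : Φ '' (V ∩ O a b) ∈ nhds (Φ x) := by
      rw [← h.map_nhds hx]
      exact Filter.image_mem_map ((hV.inter (isOpen_O a b)).mem_nhds ⟨hxV, hxO⟩)
    have m2 : Φ '' (W ∩ O a b) ∈ nhds (Φ x) := by
      rw [he, ← h.map_nhds hy]
      exact Filter.image_mem_map ((hW.inter (isOpen_O a b)).mem_nhds ⟨hyW, hyO⟩)
    filter_upwards [m1, m2]
    rintro _ ⟨u, hu, rfl⟩ ⟨v, hv, hvu⟩
    exact ⟨(u, v), ⟨⟨O_sub_K a b hu.2, O_sub_K a b hv.2⟩, hvu.symm,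
      fun e => Set.disjoint_left.1 hd hu.1 (by rw [show u = v from e]; exact hv.1)⟩, rfl⟩
  rcases isClopen_iff.1 ⟨hSc.isClosed, hSo⟩ with h0 | h1
  · intro x hx y hy e
    by_contra hne
    have : Φ x ∈ S := ⟨(x, y), ⟨⟨hx, hy⟩, e, hne⟩, rfl⟩
    rw [h0] at this
    exact this
  · rw [h1] at hSc
    exact absurd hSc (noncompact_univ E)

lemma Hyp.main (h : Hyp a b Φ) : Set.BijOn Φ (K a b) (K a b) ∧ Set.BijOn Φ (O a b) (O a b) := by
  refine ⟨⟨h.mapsK, h.inj, ?_⟩, ⟨h.mapsO, h.inj.mono (O_sub_K a b), h.surj.ge⟩⟩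
  have hK : IsClosed (Φ '' K a b) := ((isCompact_K a b).image_of_continuousOn h.cont).isClosed
  show K a b ⊆ Φ '' K a b
  rw [← closure_O a b h.hab] at hK ⊢
  apply closure_minimal _ hK
  rw [closure_O a b h.hab]
  exact h.surj.ge.trans (Set.image_mono (O_sub_K a b))

end RectReg

/-- Let `Ω = (a₁,b₁) × (a₂,b₂)` be an open rectangle in `ℝ²` and let
`φ : ℝ² → ℝ²` be continuously differentiable on an open neighborhood `U` of the closure
of `Ω`, satisfying the boundary condition `φ ⬝ n = 0` on `∂Ω` (i.e. the first component
of `φ` vanishes on the vertical edges and the second component vanishes on the horizontal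
edges).  If the Jacobian determinant of `Φ = id + φ` is strictly positive on the closure
of `Ω`, then `Φ` maps the closure of `Ω` bijectively onto itself, and `Ω` bijectively
onto itself. -/
theorem rectangle_registration_bijective
    (a₁ b₁ a₂ b₂ : ℝ) (hab₁ : a₁ < b₁) (hab₂ : a₂ < b₂)
    (Ω : Set (EuclideanSpace ℝ (Fin 2)))
    (hΩ : Ω = {x : EuclideanSpace ℝ (Fin 2) |
      x 0 ∈ Set.Ioo a₁ b₁ ∧ x 1 ∈ Set.Ioo a₂ b₂})
    (φ Φ : EuclideanSpace ℝ (Fin 2) → EuclideanSpace ℝ (Fin 2))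
    (hΦ : Φ = fun x => x + φ x)
    (U : Set (EuclideanSpace ℝ (Fin 2))) (hUopen : IsOpen U) (hUnbhd : closure Ω ⊆ U)
    (hφ : ContDiffOn ℝ 1 φ U)
    (hbc₁ : ∀ x ∈ closure Ω, (x 0 = a₁ ∨ x 0 = b₁) → φ x 0 = 0)
    (hbc₂ : ∀ x ∈ closure Ω, (x 1 = a₂ ∨ x 1 = b₂) → φ x 1 = 0)
    (hjac : ∀ x ∈ closure Ω, 0 < LinearMap.det (fderiv ℝ Φ x :
      EuclideanSpace ℝ (Fin 2) →ₗ[ℝ] EuclideanSpace ℝ (Fin 2))) :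
    Set.BijOn Φ (closure Ω) (closure Ω) ∧ Set.BijOn Φ Ω Ω := by
  have hO : Ω = RectReg.O ![a₁, a₂] ![b₁, b₂] := by
    rw [hΩ]; ext x; simp [RectReg.O, Fin.forall_fin_two]
  have hab : ∀ i, (![a₁, a₂] : Fin 2 → ℝ) i < ![b₁, b₂] i := by
    simp [Fin.forall_fin_two, hab₁, hab₂]
  have hcl : closure Ω = RectReg.K ![a₁, a₂] ![b₁, b₂] := by
    rw [hO]; exact RectReg.closure_O _ _ hab
  have H : RectReg.Hyp ![a₁, a₂] ![b₁, b₂] Φ := by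
    refine ⟨hab, ?_, ?_⟩
    · intro x hx
      rw [← hcl] at hx
      have hc : ContDiffAt ℝ 1 Φ x := by
        rw [hΦ]
        exact contDiffAt_id.add (hφ.contDiffAt (hUopen.mem_nhds (hUnbhd hx)))
      have hs := hc.hasStrictFDerivAt one_ne_zero
      have hd := (hjac x hx).ne'
      exact ⟨(fderiv ℝ Φ x).toContinuousLinearEquivOfDetNeZero hd, by
        rw [ContinuousLinearMap.coe_toContinuousLinearEquivOfDetNeZero]; exact hs⟩
    · intro x hx
      rw [← hcl] at hx
      rw [Fin.forall_fin_two]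
      constructor
      · intro h
        simp [hΦ, hbc₁ x hx (by simpa using h)]
      · intro h
        simp [hΦ, hbc₂ x hx (by simpa using h)]
  rw [hcl, hO]
  exact H.main
end

section
/- Let Ω = (a₁,b₁)×(a₂,b₂) be an open rectangle in ℝ² and let φ₁,…,φ_M : ℝ² → ℝ² be finitely many vector fields, each continuously differentiable on a neighborhood of the closure of Ω and each satisfying the boundary condition φ·n = 0 on ∂Ω. Then there exists r > 0 such that for every coefficient vector a ∈ ℝ^M with Euclidean norm ‖a‖₂ ≤ r, the map Φ_a = id + Σ_{m=1}^M a_m φ_m is a bijection from the closure of Ω onto the closure of Ω. -/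
/-- Coordinatewise clamp onto a closed rectangle. -/
noncomputable def rectClamp (a₁ b₁ a₂ b₂ : ℝ) (x : EuclideanSpace ℝ (Fin 2)) :
    EuclideanSpace ℝ (Fin 2) :=
  !₂[max a₁ (min b₁ (x 0)), max a₂ (min b₂ (x 1))]

lemma abs_clamp_sub_le (a b u v : ℝ) : |max a (min b u) - max a (min b v)| ≤ |u - v| := by
  refine (abs_max_sub_max_le_max _ _ _ _).trans ?_
  refine max_le (by simp) ((abs_min_sub_min_le_max _ _ _ _).trans (max_le (by simp) le_rfl))

lemma rectClamp_dist (a₁ b₁ a₂ b₂ : ℝ) (x y : EuclideanSpace ℝ (Fin 2)) :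
    dist (rectClamp a₁ b₁ a₂ b₂ x) (rectClamp a₁ b₁ a₂ b₂ y) ≤ dist x y := by
  rw [EuclideanSpace.dist_eq, EuclideanSpace.dist_eq]
  apply Real.sqrt_le_sqrt
  simp only [Fin.sum_univ_two, Real.dist_eq]
  have h0 : |rectClamp a₁ b₁ a₂ b₂ x 0 - rectClamp a₁ b₁ a₂ b₂ y 0| ≤ |x 0 - y 0| :=
    abs_clamp_sub_le _ _ _ _
  have h1 : |rectClamp a₁ b₁ a₂ b₂ x 1 - rectClamp a₁ b₁ a₂ b₂ y 1| ≤ |x 1 - y 1| :=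
    abs_clamp_sub_le _ _ _ _
  gcongr

lemma closure_rect (a₁ b₁ a₂ b₂ : ℝ) (hab₁ : a₁ < b₁) (hab₂ : a₂ < b₂) :
    closure {x : EuclideanSpace ℝ (Fin 2) | x 0 ∈ Set.Ioo a₁ b₁ ∧ x 1 ∈ Set.Ioo a₂ b₂} =
      {x : EuclideanSpace ℝ (Fin 2) | x 0 ∈ Set.Icc a₁ b₁ ∧ x 1 ∈ Set.Icc a₂ b₂} := by
  have key : {x : EuclideanSpace ℝ (Fin 2) | x 0 ∈ Set.Ioo a₁ b₁ ∧ x 1 ∈ Set.Ioo a₂ b₂} =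
      ((EuclideanSpace.equiv (Fin 2) ℝ).toHomeomorph.trans
        (Homeomorph.finTwoArrow (X := ℝ))) ⁻¹' (Set.Ioo a₁ b₁ ×ˢ Set.Ioo a₂ b₂) := by
    rfl
  rw [key, ← Homeomorph.preimage_closure, closure_prod_eq, closure_Ioo hab₁.ne,
    closure_Ioo hab₂.ne]
  rfl

lemma rect_compact (a₁ b₁ a₂ b₂ : ℝ) :
    IsCompact {x : EuclideanSpace ℝ (Fin 2) | x 0 ∈ Set.Icc a₁ b₁ ∧ x 1 ∈ Set.Icc a₂ b₂} := by
  have key : {x : EuclideanSpace ℝ (Fin 2) | x 0 ∈ Set.Icc a₁ b₁ ∧ x 1 ∈ Set.Icc a₂ b₂} =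
      ((EuclideanSpace.equiv (Fin 2) ℝ).toHomeomorph.trans
        (Homeomorph.finTwoArrow (X := ℝ))) ⁻¹' (Set.Icc a₁ b₁ ×ˢ Set.Icc a₂ b₂) := by
    rfl
  rw [key, Homeomorph.isCompact_preimage]
  exact isCompact_Icc.prod isCompact_Icc

lemma rect_convex (a₁ b₁ a₂ b₂ : ℝ) :
    Convex ℝ {x : EuclideanSpace ℝ (Fin 2) | x 0 ∈ Set.Icc a₁ b₁ ∧ x 1 ∈ Set.Icc a₂ b₂} := by
  intro x hx y hy s t hs ht hst
  exact ⟨convex_Icc a₁ b₁ hx.1 hy.1 hs ht hst, convex_Icc a₂ b₂ hx.2 hy.2 hs ht hst⟩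

lemma abs_coord_le (x : EuclideanSpace ℝ (Fin 2)) (i : Fin 2) : |x i| ≤ ‖x‖ := by
  simpa using PiLp.norm_apply_le x i

/-- A tangential field on the rectangle that is `1/2`-Lipschitz perturbs the identity to a
bijection. -/
lemma bijOn_of_contraction (a₁ b₁ a₂ b₂ : ℝ) (hab₁ : a₁ < b₁) (hab₂ : a₂ < b₂)
    (K : Set (EuclideanSpace ℝ (Fin 2)))
    (hK : K = {x | x 0 ∈ Set.Icc a₁ b₁ ∧ x 1 ∈ Set.Icc a₂ b₂})
    (g : EuclideanSpace ℝ (Fin 2) → EuclideanSpace ℝ (Fin 2))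
    (hg : ∀ x ∈ K, ∀ y ∈ K, ‖g x - g y‖ ≤ 1 / 2 * ‖x - y‖)
    (h₁ : ∀ x ∈ K, (x 0 = a₁ ∨ x 0 = b₁) → g x 0 = 0)
    (h₂ : ∀ x ∈ K, (x 1 = a₂ ∨ x 1 = b₂) → g x 1 = 0) :
    Set.BijOn (fun x => x + g x) K K := by
  have hmem : ∀ x, x ∈ K ↔ (a₁ ≤ x 0 ∧ x 0 ≤ b₁) ∧ (a₂ ≤ x 1 ∧ x 1 ≤ b₂) := by
    intro x; rw [hK]; rfl
  have hn0 : ∀ (x : EuclideanSpace ℝ (Fin 2)) (c : ℝ), ‖x - !₂[c, x 1]‖ = |x 0 - c| := by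
    intro x c
    rw [EuclideanSpace.norm_eq]
    simp [Fin.sum_univ_two, Real.sqrt_sq_eq_abs]
  have hn1 : ∀ (x : EuclideanSpace ℝ (Fin 2)) (c : ℝ), ‖x - !₂[x 0, c]‖ = |x 1 - c| := by
    intro x c
    rw [EuclideanSpace.norm_eq]
    simp [Fin.sum_univ_two, Real.sqrt_sq_eq_abs]
  have e0 : ∀ x ∈ K, ∀ c, (c = a₁ ∨ c = b₁) → |g x 0| ≤ 1 / 2 * |x 0 - c| := by
    intro x hx c hc
    have hx' := (hmem x).1 hx
    have hy : !₂[c, x 1] ∈ K := by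
      rw [hmem]
      refine ⟨?_, hx'.2⟩
      rcases hc with rfl | rfl
      · exact ⟨le_rfl, hab₁.le⟩
      · exact ⟨hab₁.le, le_rfl⟩
    have hz := h₁ _ hy hc
    have h := (abs_coord_le _ 0).trans (hg x hx _ hy)
    rw [hn0, PiLp.sub_apply, hz, sub_zero] at h
    exact h
  have e1 : ∀ x ∈ K, ∀ c, (c = a₂ ∨ c = b₂) → |g x 1| ≤ 1 / 2 * |x 1 - c| := by
    intro x hx c hc
    have hx' := (hmem x).1 hx
    have hy : !₂[x 0, c] ∈ K := by
      rw [hmem]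
      refine ⟨hx'.1, ?_⟩
      rcases hc with rfl | rfl
      · exact ⟨le_rfl, hab₂.le⟩
      · exact ⟨hab₂.le, le_rfl⟩
    have hz := h₂ _ hy hc
    have h := (abs_coord_le _ 1).trans (hg x hx _ hy)
    rw [hn1, PiLp.sub_apply, hz, sub_zero] at h
    exact h
  refine ⟨?_, ?_, ?_⟩
  · intro x hx
    have hx' := (hmem x).1 hx
    obtain ⟨⟨p1, p2⟩, p3, p4⟩ := hx'
    have q1 := e0 x hx a₁ (Or.inl rfl)
    have q2 := e0 x hx b₁ (Or.inr rfl)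
    have q3 := e1 x hx a₂ (Or.inl rfl)
    have q4 := e1 x hx b₂ (Or.inr rfl)
    rw [abs_of_nonneg (sub_nonneg.2 p1)] at q1
    rw [abs_of_nonpos (sub_nonpos.2 p2)] at q2
    rw [abs_of_nonneg (sub_nonneg.2 p3)] at q3
    rw [abs_of_nonpos (sub_nonpos.2 p4)] at q4
    rw [abs_le] at q1 q2 q3 q4
    rw [hmem]
    simp only [PiLp.add_apply]
    refine ⟨⟨?_, ?_⟩, ?_, ?_⟩ <;> linarith
  · intro x hx y hy hxy
    have hxy' : x + g x = y + g y := hxy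
    have h := hg x hx y hy
    have : g x - g y = -(x - y) := by
      rw [sub_eq_iff_eq_add, eq_comm, ← sub_eq_zero]
      rw [← sub_eq_zero] at hxy'
      rw [← neg_eq_zero, ← hxy']
      abel
    rw [this, norm_neg] at h
    have h0 : ‖x - y‖ = 0 := le_antisymm (by linarith) (norm_nonneg _)
    exact sub_eq_zero.1 (norm_eq_zero.1 h0)
  · intro y hy
    set P := rectClamp a₁ b₁ a₂ b₂ with hP
    have P0 : ∀ x, P x 0 = max a₁ (min b₁ (x 0)) := fun x => rfl
    have P1 : ∀ x, P x 1 = max a₂ (min b₂ (x 1)) := fun x => rfl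
    have PK : ∀ x, P x ∈ K := by
      intro x
      rw [hmem, P0, P1]
      exact ⟨⟨le_max_left _ _, max_le hab₁.le (min_le_left _ _)⟩,
        le_max_left _ _, max_le hab₂.le (min_le_left _ _)⟩
    have hT : ContractingWith (1 / 2) (fun x => P (y - g (P x))) := by
      refine ⟨by rw [← NNReal.coe_lt_coe]; norm_num, LipschitzWith.of_dist_le_mul ?_⟩
      intro x x'
      calc dist (P (y - g (P x))) (P (y - g (P x')))
          ≤ dist (y - g (P x)) (y - g (P x')) := rectClamp_dist _ _ _ _ _ _
        _ = ‖g (P x) - g (P x')‖ := by rw [dist_sub_left, dist_eq_norm]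
        _ ≤ 1 / 2 * ‖P x - P x'‖ := hg _ (PK _) _ (PK _)
        _ ≤ 1 / 2 * dist x x' := by
          rw [← dist_eq_norm]
          gcongr
          exact rectClamp_dist _ _ _ _ _ _
        _ = _ := by norm_num
    obtain ⟨x, hx⟩ : ∃ x, P (y - g (P x)) = x := ⟨_, hT.fixedPoint_isFixedPt⟩
    have hxK : x ∈ K := hx ▸ PK _
    have PxK : ∀ z ∈ K, P z = z := by
      intro z hz
      obtain ⟨⟨p1, p2⟩, p3, p4⟩ := (hmem z).1 hz
      ext i
      fin_cases i
      · show P z 0 = z 0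
        rw [P0, min_eq_right p2, max_eq_right p1]
      · show P z 1 = z 1
        rw [P1, min_eq_right p4, max_eq_right p3]
    rw [PxK x hxK] at hx
    obtain ⟨⟨y1, y2⟩, y3, y4⟩ := (hmem y).1 hy
    have x0 : x 0 = max a₁ (min b₁ (y 0 - g x 0)) := by
      have := P0 (y - g x)
      rwa [hx] at this
    have x1 : x 1 = max a₂ (min b₂ (y 1 - g x 1)) := by
      have := P1 (y - g x)
      rwa [hx] at this
    have hzK : y - g x ∈ K := by
      rw [hmem]
      simp only [PiLp.sub_apply]
      refine ⟨⟨?_, ?_⟩, ?_, ?_⟩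
      · by_contra! hc
        have := h₁ x hxK (Or.inl (by
          rw [x0, min_eq_right (by linarith), max_eq_left hc.le]))
        linarith
      · by_contra! hc
        have := h₁ x hxK (Or.inr (by
          rw [x0, min_eq_left hc.le, max_eq_right hab₁.le]))
        linarith
      · by_contra! hc
        have := h₂ x hxK (Or.inl (by
          rw [x1, min_eq_right (by linarith), max_eq_left hc.le]))
        linarith
      · by_contra! hc
        have := h₂ x hxK (Or.inr (by
          rw [x1, min_eq_left hc.le, max_eq_right hab₂.le]))
        linarith
    rw [PxK _ hzK] at hx
    refine ⟨x, hxK, ?_⟩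
    show x + g x = y
    rw [eq_comm, ← sub_eq_iff_eq_add]
    exact hx

/-- Let `Ω = (a₁,b₁) × (a₂,b₂)` be an open rectangle in `ℝ²` and let
`φ₁, …, φ_M : ℝ² → ℝ²` be finitely many vector fields, each continuously differentiable
on an open neighborhood of the closure of `Ω` and each satisfying the boundary condition
`φ ⬝ n = 0` on `∂Ω`.  Then there is `r > 0` such that for every coefficient vector
`a ∈ ℝ^M` with Euclidean norm `‖a‖₂ ≤ r`, the map `Φ_a = id + Σ_m a_m φ_m` is a
bijection from the closure of `Ω` onto itself. -/
theorem small_coefficients_give_bijections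
    (a₁ b₁ a₂ b₂ : ℝ) (hab₁ : a₁ < b₁) (hab₂ : a₂ < b₂)
    (Ω : Set (EuclideanSpace ℝ (Fin 2)))
    (hΩ : Ω = {x : EuclideanSpace ℝ (Fin 2) |
      x 0 ∈ Set.Ioo a₁ b₁ ∧ x 1 ∈ Set.Ioo a₂ b₂})
    (M : ℕ) (φ : Fin M → EuclideanSpace ℝ (Fin 2) → EuclideanSpace ℝ (Fin 2))
    (hφ : ∀ m : Fin M, ∃ U : Set (EuclideanSpace ℝ (Fin 2)),
      IsOpen U ∧ closure Ω ⊆ U ∧ ContDiffOn ℝ 1 (φ m) U)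
    (hbc₁ : ∀ m : Fin M, ∀ x ∈ closure Ω, (x 0 = a₁ ∨ x 0 = b₁) → φ m x 0 = 0)
    (hbc₂ : ∀ m : Fin M, ∀ x ∈ closure Ω, (x 1 = a₂ ∨ x 1 = b₂) → φ m x 1 = 0) :
    ∃ r : ℝ, 0 < r ∧ ∀ a : EuclideanSpace ℝ (Fin M), ‖a‖ ≤ r →
      Set.BijOn (fun x => x + ∑ m : Fin M, a m • φ m x) (closure Ω) (closure Ω) := by
  have hcl : closure Ω = {x | x 0 ∈ Set.Icc a₁ b₁ ∧ x 1 ∈ Set.Icc a₂ b₂} := by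
    rw [hΩ]; exact closure_rect _ _ _ _ hab₁ hab₂
  generalize closure Ω = K at *
  have hL : ∀ m, ∃ L : NNReal, LipschitzOnWith L (φ m) K := by
    intro m
    obtain ⟨U, -, hKU, hc⟩ := hφ m
    refine (hc.mono hKU).exists_lipschitzOnWith one_ne_zero ?_ ?_
    · rw [hcl]; exact rect_convex _ _ _ _
    · rw [hcl]; exact rect_compact _ _ _ _
  choose L hL using hL
  set C : ℝ := ∑ m, (L m : ℝ) with hC
  have hC0 : 0 ≤ C := Finset.sum_nonneg fun m _ => (L m).coe_nonneg
  refine ⟨1 / (2 * (C + 1)), by positivity, fun a ha => ?_⟩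
  refine bijOn_of_contraction a₁ b₁ a₂ b₂ hab₁ hab₂ K hcl
    (fun x => ∑ m : Fin M, a m • φ m x) ?_ ?_ ?_
  · intro x hx y hy
    have haC : ‖a‖ * C ≤ 1 / 2 := by
      calc ‖a‖ * C ≤ 1 / (2 * (C + 1)) * (C + 1) := by gcongr; linarith
        _ = 1 / 2 := by field_simp
    calc ‖∑ m, a m • φ m x - ∑ m, a m • φ m y‖
        = ‖∑ m, a m • (φ m x - φ m y)‖ := by
          rw [← Finset.sum_sub_distrib]; simp only [smul_sub]
      _ ≤ ∑ m, ‖a‖ * (L m * ‖x - y‖) := by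
          refine norm_sum_le_of_le _ fun m _ => ?_
          rw [norm_smul]
          gcongr
          · exact PiLp.norm_apply_le a m
          · exact (hL m).norm_sub_le hx hy
      _ = (‖a‖ * C) * ‖x - y‖ := by
          rw [hC, ← Finset.mul_sum, ← Finset.sum_mul, mul_assoc]
      _ ≤ 1 / 2 * ‖x - y‖ := by gcongr
  · intro x hx h
    simp [hbc₁ _ x hx h]
  · intro x hx h
    simp [hbc₂ _ x hx h]
end

section
/- Let D = {x ∈ ℝ² : ‖x‖₂ ≤ 1} be the closed unit disk and S = {x ∈ ℝ² : ‖x‖₂ = 1} the unit circle. Let Φ₁, Φ₂ : ℝ² → ℝ² be continuous maps with Φ₁(S) ⊆ S and Φ₂(S) ⊆ S, and suppose there exists x₀ ∈ S with Φ₁(x₀) ≠ Φ₂(x₀). Then for every t ∈ (0,1), the convex combination Φ_t = (1−t)Φ₁ + tΦ₂ is not a bijection from D onto D. -/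
open Set Metric in
theorem disk_strict {x y : EuclideanSpace ℝ (Fin 2)} {a b : ℝ} (hx : ‖x‖ ≤ 1) (hy : ‖y‖ ≤ 1)
    (hxy : x ≠ y) (ha : 0 < a) (hb : 0 < b) (hab : a + b = 1) : ‖a • x + b • y‖ < 1 :=
  norm_combo_lt_of_ne hx hy hxy ha hb hab

open Set Metric in
theorem disk_bijOn_boundary
    (f : EuclideanSpace ℝ (Fin 2) → EuclideanSpace ℝ (Fin 2)) (hf : Continuous f)
    (hb : BijOn f (closedBall 0 1) (closedBall 0 1))
    (x₀ : EuclideanSpace ℝ (Fin 2)) (hx₀ : ‖x₀‖ = 1) : ¬ ‖f x₀‖ < 1 := by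
  intro hlt
  have hx₀D : x₀ ∈ closedBall (0 : EuclideanSpace ℝ (Fin 2)) 1 := by simp [hx₀]
  -- the punctured disk is convex
  have hconv : Convex ℝ (closedBall (0 : EuclideanSpace ℝ (Fin 2)) 1 \ {x₀}) := by
    intro x hx y hy a b ha hb' hab
    refine ⟨(convex_closedBall _ _) hx.1 hy.1 ha hb' hab, ?_⟩
    rintro h
    rw [mem_singleton_iff] at h
    rcases eq_or_ne x y with rfl | hne
    · rw [← add_smul, hab, one_smul] at h
      exact hx.2 h
    rcases ha.eq_or_lt with rfl | ha
    · have : b = 1 := by linarith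
      subst this
      exact hy.2 (by simpa using h)
    rcases hb'.eq_or_lt with rfl | hb'
    · have : a = 1 := by linarith
      subst this
      exact hx.2 (by simpa using h)
    have := disk_strict (by simpa using hx.1) (by simpa using hy.1) hne ha hb' hab
    rw [h, hx₀] at this
    exact lt_irrefl _ this
  let U := closedBall (0 : EuclideanSpace ℝ (Fin 2)) 1 \ {x₀}
  have hnegmem : -x₀ ∈ U := by
    refine ⟨by simp [hx₀], fun h => ?_⟩
    have h1 : x₀ = -x₀ := (mem_singleton_iff.1 h).symm
    have h2 : (2 : ℝ) • x₀ = 0 := by rw [two_smul]; nth_rewrite 2 [h1]; simp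
    have h0 : x₀ = 0 := by simpa using h2
    simp [h0] at hx₀
  have : ContractibleSpace U := hconv.contractibleSpace ⟨_, hnegmem⟩
  have : LocallyPathConnectedSpace U := hconv.locallyPathConnectedSpace
  let e := Complex.orthonormalBasisOneI.repr
  have hG0 : ∀ u : U, e.symm (f u - f x₀) ∈ ({0}ᶜ : Set ℂ) := by
    intro u h
    have h1 : f u - f x₀ = 0 := (LinearIsometryEquiv.map_eq_zero_iff e.symm).1 h
    exact u.2.2 (hb.injOn u.2.1 hx₀D (sub_eq_zero.1 h1))
  let G : C(U, ℂ) := ⟨fun u => e.symm (f u - f x₀), by fun_prop⟩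
  obtain ⟨L, ⟨-, hL⟩, -⟩ := Complex.isCoveringMapOn_exp.existsUnique_continuousMap_lifts G
    (a₀ := ⟨_, hnegmem⟩) (Complex.exp_log (hG0 ⟨_, hnegmem⟩)) hG0
  -- the inverse
  let D := closedBall (0 : EuclideanSpace ℝ (Fin 2)) 1
  have : CompactSpace D := isCompact_iff_compactSpace.1 (isCompact_closedBall _ _)
  let E : D ≃ D := hb.equiv f
  have hE : Continuous E := by
    apply Continuous.subtype_mk
    exact hf.comp continuous_subtype_val
  let Hm : D ≃ₜ D := hE.homeoOfEquivCompactToT2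
  -- the loop
  let r : ℝ := 1 - ‖f x₀‖
  have hr : 0 < r := by simp only [r]; linarith
  let c : ℝ → EuclideanSpace ℝ (Fin 2) :=
    fun θ => f x₀ + e ((r : ℂ) * Complex.exp (θ * Complex.I))
  have hcn : ∀ θ : ℝ, ‖e ((r : ℂ) * Complex.exp (θ * Complex.I))‖ = r := by
    intro θ
    rw [LinearIsometryEquiv.norm_map, norm_mul, Complex.norm_exp_ofReal_mul_I]
    simp [abs_of_pos hr]
  have hcD : ∀ θ, c θ ∈ D := by
    intro θ
    rw [mem_closedBall_zero_iff]
    have := norm_add_le (f x₀) (e ((r : ℂ) * Complex.exp (θ * Complex.I)))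
    rw [hcn] at this
    simp only [c]
    linarith
  have hcc : Continuous c := by
    simp only [c]
    fun_prop
  let γ : ℝ → D := fun θ => Hm.symm ⟨c θ, hcD θ⟩
  have hγc : Continuous γ := Hm.symm.continuous.comp (hcc.subtype_mk _)
  have hfγ : ∀ θ, f (γ θ) = c θ := by
    intro θ
    exact congrArg Subtype.val (Hm.apply_symm_apply ⟨c θ, hcD θ⟩)
  have hγU : ∀ θ, (γ θ : EuclideanSpace ℝ (Fin 2)) ∈ U := by
    intro θ
    refine ⟨(γ θ).2, fun h => ?_⟩
    have h1 := hfγ θ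
    rw [mem_singleton_iff.1 h] at h1
    have h2 := hcn θ
    rw [left_eq_add.1 h1, norm_zero] at h2
    linarith
  let M : ℝ → ℂ := fun θ => L ⟨γ θ, hγU θ⟩
  have hMc : Continuous M :=
    L.continuous.comp ((continuous_subtype_val.comp hγc).subtype_mk _)
  have hM : ∀ θ, Complex.exp (M θ) = (r : ℂ) * Complex.exp (θ * Complex.I) := by
    intro θ
    have h1 : Complex.exp (M θ) = e.symm (f (γ θ) - f x₀) := congrFun hL ⟨γ θ, hγU θ⟩
    rw [h1, hfγ]
    simp only [c, add_sub_cancel_left, LinearIsometryEquiv.symm_apply_apply]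
  -- uniqueness of lifts
  let N : ℝ → ℂ := fun θ => M 0 + θ * Complex.I
  have hNc : Continuous N := by
    simp only [N]
    fun_prop
  have hMN : M = N := by
    refine Complex.isCoveringMap_exp.eq_of_comp_eq hMc hNc ?_ 0 (by simp [N])
    funext θ
    apply Subtype.ext
    change Complex.exp (M θ) = Complex.exp (N θ)
    simp only [N, Complex.exp_add, hM]
    simp
  have hper : M (2 * Real.pi) = M 0 := by
    have h1 : c (2 * Real.pi) = c 0 := by
      simp only [c]
      push_cast
      rw [Complex.exp_two_pi_mul_I]
      simp
    have h2 : γ (2 * Real.pi) = γ 0 := by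
      simp only [γ]
      congr 1
      exact Subtype.ext h1
    simp only [M, h2]
  have h3 : N (2 * Real.pi) = M 0 := by rw [← hMN, hper]
  simp only [N, add_eq_left] at h3
  simp [Real.pi_ne_zero] at h3

/-- the paper's Lemma 2.2.  Let `D` be the closed unit disk and `S`
the unit circle in `ℝ²`.  Let `Φ₁, Φ₂ : ℝ² → ℝ²` be continuous maps with
`Φ₁(S) ⊆ S`, `Φ₂(S) ⊆ S`, and `Φ₁(x₀) ≠ Φ₂(x₀)` for some `x₀ ∈ S`.  Then for every
`t ∈ (0,1)`, the convex combination `Φ_t = (1-t)Φ₁ + tΦ₂` is not a bijection from `D`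
onto `D`. -/
theorem convex_combination_not_bijection_of_disk
    (Φ₁ Φ₂ : EuclideanSpace ℝ (Fin 2) → EuclideanSpace ℝ (Fin 2))
    (hc₁ : Continuous Φ₁) (hc₂ : Continuous Φ₂)
    (h₁ : Set.MapsTo Φ₁ (Metric.sphere (0 : EuclideanSpace ℝ (Fin 2)) 1)
      (Metric.sphere (0 : EuclideanSpace ℝ (Fin 2)) 1))
    (h₂ : Set.MapsTo Φ₂ (Metric.sphere (0 : EuclideanSpace ℝ (Fin 2)) 1)
      (Metric.sphere (0 : EuclideanSpace ℝ (Fin 2)) 1))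
    (x₀ : EuclideanSpace ℝ (Fin 2))
    (hx₀ : x₀ ∈ Metric.sphere (0 : EuclideanSpace ℝ (Fin 2)) 1)
    (hne : Φ₁ x₀ ≠ Φ₂ x₀) :
    ∀ t ∈ Set.Ioo (0 : ℝ) 1,
      ¬ Set.BijOn (fun x => (1 - t) • Φ₁ x + t • Φ₂ x)
          (Metric.closedBall (0 : EuclideanSpace ℝ (Fin 2)) 1)
          (Metric.closedBall (0 : EuclideanSpace ℝ (Fin 2)) 1) := by
  intro t ht hb
  refine disk_bijOn_boundary _ (by fun_prop) hb x₀ (by simpa using hx₀) ?_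
  have n1 : ‖Φ₁ x₀‖ = 1 := by simpa using h₁ hx₀
  have n2 : ‖Φ₂ x₀‖ = 1 := by simpa using h₂ hx₀
  exact disk_strict n1.le n2.le hne (by linarith [ht.2]) ht.1 (by ring)
end
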